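/- Fix p > 1 and x > 2, and set s = log 2/(p·log x). Let {I_j} be a Cantor construction whose Cantor set C_{p,x} has Lebesgue measure zero, i.e. |I_l^k| = Σ_{h≥0} Σ_{m=0}^{2^h−1} |G_{2^h·l+m}^{k+h}| for all k, l, and whose gaps satisfy |G_l^k| = (⌊x^k⌋ + l)^{−p} for all k ≥ 0 and 0 ≤ l ≤ 2^k − 1. Let μ_s be the generalized Hausdorff measure associated to the gauge function h(w,δ) = δ^s. Then μ_s(C_{p,x}) = (1 − 2·x^{−p})^{−s}. -/

import Mathlib

/-!
Put `r = x^(-p) < 1/2` and `L = 1/(1 - 2r)`. Then `r^s = 1/2`. Since `l < 2^n` is negligible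
against `x^n`, every gap of level `n` has length `r^n` up to a factor tending to `1`, and summing
the gaps inside a basic interval shows that every basic interval of level `n` has length `L r^n` up
to such a factor (`gap_asymp`, `CantorConstruction.len_bounds`). So at small scales the set looks
like the self-similar Cantor set of ratio `r` and diameter `L`, whose `s`-measure is `L^s`.

*Upper bound* (`CantorConstruction.muH_le`). The `2^n` basic intervals of level `n` cover the set
and each contributes about `L^s r^(ns) = L^s 2^(-n)`.

*Lower bound* (`CantorConstruction.le_muH`). Enlarge a cover slightly to make it open. By a Lebesgue
number argument every basic interval of a large level `n` lies in one of the covering intervals, so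
it is enough that an interval of length `d` contains at most about `2^n (d/L)^s` basic intervals of
level `n` (`CantorConstruction.card_le`). The hull of the basic intervals number `l₁, …, l₂` is
a union of basic intervals and gaps, so its length is at least nearly the length of its counterpart
in the self-similar model (`CantorConstruction.span`). That length is
`L r^n (Q l₂ - Q l₁ + 1)`, where `Q` (`modelQ`) gives the normalized left endpoints, and the sharp
inequality `(l₂ - l₁ + 1)^(1/s) ≤ Q l₂ - Q l₁ + 1` (`rpow_le_modelQ`) follows by passing to the
parent intervals, the rounding being absorbed by convexity of the power function. Comparing lengths
gap by gap requires every gap in the hull to have large level; this holds once `d` is smaller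
than all gaps of low level.
-/

open MeasureTheory Set Filter
open scoped ENNReal

noncomputable section

/-- `Iv w δ` is the closed interval with midpoint `w` and diameter `δ`. -/
def Iv (w δ : ℝ) : Set ℝ := Set.Icc (w - δ / 2) (w + δ / 2)

/-- A Cantor construction on `ℝ`: a family of nonempty closed intervals
`I j = [a j, b j]` indexed by finite binary words `j : List Bool`, such that
`I (j ++ [false])` and `I (j ++ [true])` are disjoint subsets of `I j` sharing,
respectively, the left and the right endpoint with `I j`, and such that the
maximal diameter at level `n` tends to `0`. -/
structure CantorConstruction where
  a : List Bool → ℝ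
  b : List Bool → ℝ
  le : ∀ j, a j ≤ b j
  left0 : ∀ j, a (j ++ [false]) = a j
  right1 : ∀ j, b (j ++ [true]) = b j
  sub0 : ∀ j, b (j ++ [false]) ≤ b j
  sub1 : ∀ j, a j ≤ a (j ++ [true])
  disj : ∀ j, b (j ++ [false]) < a (j ++ [true])
  shrink : ∀ ε > (0 : ℝ), ∃ N : ℕ, ∀ j : List Bool, N ≤ j.length → b j - a j < ε

namespace CantorConstruction

variable (C : CantorConstruction)

/-- The basic interval `I_j`. -/
def I (j : List Bool) : Set ℝ := Set.Icc (C.a j) (C.b j)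

/-- The diameter `|I_j|` of the basic interval `I_j`. -/
def len (j : List Bool) : ℝ := C.b j - C.a j

/-- The midpoint of the basic interval `I_j`. -/
def mid (j : List Bool) : ℝ := (C.a j + C.b j) / 2

/-- The gap `G_j = I_j \ (I_{j0} ∪ I_{j1})`. -/
def gap (j : List Bool) : Set ℝ :=
  Set.Ioo (C.b (j ++ [false])) (C.a (j ++ [true]))

/-- The diameter `|G_j|` of the gap `G_j`. -/
def gapLen (j : List Bool) : ℝ := C.a (j ++ [true]) - C.b (j ++ [false])

/-- The Cantor set `C = ⋂_n ⋃_{|j| = n} I_j` associated to the construction. -/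
def cantorSet : Set ℝ := ⋂ n : ℕ, ⋃ j ∈ {j : List Bool | j.length = n}, C.I j

/-- `ν` is the Cantor measure of the construction: a Borel probability measure on `ℝ`
with `ν (I_j) = 2^{-|j|}` for every binary word `j`. -/
def IsCantorMeasure (ν : Measure ℝ) : Prop :=
  IsProbabilityMeasure ν ∧ ∀ j : List Bool, ν (C.I j) = (2 ^ j.length : ℝ≥0∞)⁻¹

end CantorConstruction

/-- `word k l` is the length-`k` binary expansion of `l` (most significant digit first),
so that `I_l^k = I (word k l)` in the step/position indexing. -/
def word : ℕ → ℕ → List Bool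
  | 0, _ => []
  | k + 1, l => word k (l / 2) ++ [decide (l % 2 = 1)]

/-- `h : ℝ × (0,∞) → (0,∞)` is a gauge function: continuous, positive,
`h (w, δ) → 0` as `δ → 0` for every `w`, and increasing as an interval function. -/
def IsGauge (h : ℝ → ℝ → ℝ) : Prop :=
  ContinuousOn (Function.uncurry h) {p : ℝ × ℝ | 0 < p.2} ∧
  (∀ w δ : ℝ, 0 < δ → 0 < h w δ) ∧
  (∀ w : ℝ, Tendsto (h w) (nhdsWithin 0 (Set.Ioi 0)) (nhds 0)) ∧
  (∀ w δ w' δ' : ℝ, 0 < δ → 0 < δ' → Iv w δ ⊆ Iv w' δ' → h w δ ≤ h w' δ')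

/-- The generalized Hausdorff measure `μ_h` associated to a gauge function `h`:
`μ_h(E) = lim_{δ → 0} inf { Σ_k h (w_k, δ_k) }`, the infimum being over countable
covers of `E` by intervals `Iv w_k δ_k` with `0 < δ_k ≤ δ`. -/
def muH (h : ℝ → ℝ → ℝ) (E : Set ℝ) : ℝ≥0∞ :=
  ⨆ (δ : ℝ) (_ : 0 < δ),
    ⨅ (c : ℕ → ℝ × ℝ)
      (_ : (∀ k, 0 < (c k).2 ∧ (c k).2 ≤ δ) ∧ E ⊆ ⋃ k, Iv (c k).1 (c k).2),
      ∑' k, ENNReal.ofReal (h (c k).1 (c k).2)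

/-- Second partial derivative `∂²h/∂w²`. -/
def d11 (h : ℝ → ℝ → ℝ) (w δ : ℝ) : ℝ :=
  deriv (fun x => deriv (fun y => h y δ) x) w

/-- Mixed second partial derivative `∂²h/∂w∂δ`. -/
def d12 (h : ℝ → ℝ → ℝ) (w δ : ℝ) : ℝ :=
  deriv (fun x => deriv (fun d => h x d) δ) w

/-- Second partial derivative `∂²h/∂δ²`. -/
def d22 (h : ℝ → ℝ → ℝ) (w δ : ℝ) : ℝ :=
  deriv (fun d => deriv (fun e => h w e) d) δ

end

/-! ### The self-similar model -/

/-- The left endpoint of the `l`-th basic interval of level `n` of the self-similar Cantor set of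
ratio `R⁻¹` starting at `0`, measured in units of the length of a level-`n` interval. With this
normalization it depends only on `l`: it is `(R - 1) * ∑ R ^ i` over the binary digits `i`
of `l` equal to `1`. -/
noncomputable def modelQ (R : ℝ) : ℕ → ℝ
  | 0 => 0
  | n + 1 => R * modelQ R ((n + 1) / 2) + if (n + 1) % 2 = 1 then R - 1 else 0

theorem modelQ_even (R : ℝ) (q : ℕ) : modelQ R (2 * q) = R * modelQ R q := by
  rcases q with _ | q
  · simp [modelQ]
  · rw [show 2 * (q + 1) = (2 * q + 1) + 1 by ring, modelQ]
    rw [show (2 * q + 1 + 1) / 2 = q + 1 by omega, if_neg (by omega), add_zero]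

theorem modelQ_odd (R : ℝ) (q : ℕ) : modelQ R (2 * q + 1) = R * modelQ R q + (R - 1) := by
  rw [modelQ, show (2 * q + 1) / 2 = q by omega, if_pos (by omega)]

/-- The increments `(m + 1) ^ t - m ^ t` of the convex function `m ^ t` are at least the one
at `m = 1`. -/
theorem rpow_succ_sub {t : ℝ} (ht : 1 ≤ t) {m : ℝ} (hm : 1 ≤ m) :
    m ^ t + ((2 : ℝ) ^ t - 1) ≤ (m + 1) ^ t := by
  have hc := (convexOn_rpow ht).2
  have hm0 : (0 : ℝ) < m := by linarith
  -- `2` and `m` are complementary convex combinations of `1` and `m + 1`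
  have h1 := hc (x := 1) (by simp) (y := m + 1) (by simp; linarith)
    (a := (m - 1) / m) (b := 1 / m) (div_nonneg (by linarith) hm0.le) (by positivity)
    (by field_simp; ring)
  have h2 := hc (x := 1) (by simp) (y := m + 1) (by simp; linarith)
    (a := 1 / m) (b := (m - 1) / m) (by positivity) (div_nonneg (by linarith) hm0.le)
    (by field_simp; ring)
  simp only [smul_eq_mul, Real.one_rpow] at h1 h2
  rw [show (m - 1) / m * 1 + 1 / m * (m + 1) = 2 by field_simp; ring] at h1
  rw [show 1 / m * 1 + (m - 1) / m * (m + 1) = m by field_simp; ring] at h2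
  have h3 : (m - 1) / m + 1 / m = 1 := by field_simp; ring
  have h4 : (m - 1) / m = 1 - 1 / m := by linarith
  rw [h4] at h1 h2
  linarith

/-- The Hölder inequality for the self-similar model, with `t = 1/s`: a run of `M` consecutive basic
intervals has hull at least `M ^ t` times the length of one of them. Passing to the parent intervals
`l₁ / 2, …, l₂ / 2` adds `e ∈ {0, 1, 2}` intervals to the run, and these are removed one at a time
with `rpow_succ_sub`. -/
theorem rpow_le_modelQ {t : ℝ} (ht : 1 ≤ t) (l₂ : ℕ) : ∀ l₁ ≤ l₂,
    ((l₂ : ℝ) - l₁ + 1) ^ t ≤ modelQ (2 ^ t) l₂ - modelQ (2 ^ t) l₁ + 1 := by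
  induction l₂ using Nat.strong_induction_on with
  | _ l₂ ih =>
  intro l₁ hl
  rcases Nat.eq_zero_or_pos l₂ with h0 | h0
  · subst h0
    obtain rfl : l₁ = 0 := by omega
    simp
  have hR : (2 : ℝ) ≤ 2 ^ t := by
    simpa using Real.rpow_le_rpow_of_exponent_le (x := 2) (by norm_num) ht
  have key := ih (l₂ / 2) (by omega) (l₁ / 2) (by omega)
  have hq : ((l₁ / 2 : ℕ) : ℝ) ≤ (l₂ / 2 : ℕ) := by exact_mod_cast (by omega : l₁ / 2 ≤ l₂ / 2)
  have hl' : (l₁ : ℝ) ≤ l₂ := by exact_mod_cast hl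
  have key2 : (2 * (((l₂ / 2 : ℕ) : ℝ) - (l₁ / 2 : ℕ) + 1)) ^ t ≤
      2 ^ t * (modelQ (2 ^ t) (l₂ / 2) - modelQ (2 ^ t) (l₁ / 2) + 1) := by
    rw [Real.mul_rpow (by norm_num) (by linarith)]
    gcongr
  obtain ⟨q₁, e₁⟩ := Nat.even_or_odd' l₁
  obtain ⟨q₂, e₂⟩ := Nat.even_or_odd' l₂
  rcases e₁ with rfl | rfl <;> rcases e₂ with rfl | rfl
  · rw [show 2 * q₁ / 2 = q₁ by omega, show 2 * q₂ / 2 = q₂ by omega] at *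
    rw [modelQ_even, modelQ_even]
    have := rpow_succ_sub ht (m := ((2 * q₂ : ℕ) : ℝ) - (2 * q₁ : ℕ) + 1) (by linarith)
    push_cast at *
    rw [show (2 * (q₂ : ℝ) - 2 * q₁ + 1 + 1) = 2 * (q₂ - q₁ + 1) by ring] at this
    linarith
  · rw [show 2 * q₁ / 2 = q₁ by omega, show (2 * q₂ + 1) / 2 = q₂ by omega] at *
    rw [modelQ_even, modelQ_odd]
    push_cast at *
    rw [show (2 * (q₂ : ℝ) + 1 - 2 * q₁ + 1) = 2 * (q₂ - q₁ + 1) by ring]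
    linarith
  · rw [show (2 * q₁ + 1) / 2 = q₁ by omega, show 2 * q₂ / 2 = q₂ by omega] at *
    rw [modelQ_even, modelQ_odd]
    have := rpow_succ_sub ht (m := ((2 * q₂ : ℕ) : ℝ) - (2 * q₁ + 1 : ℕ) + 1) (by linarith)
    have := rpow_succ_sub ht (m := ((2 * q₂ : ℕ) : ℝ) - (2 * q₁ + 1 : ℕ) + 1 + 1) (by linarith)
    push_cast at *
    rw [show (2 * (q₂ : ℝ) - (2 * q₁ + 1) + 1 + 1 + 1) = 2 * (q₂ - q₁ + 1) by ring] at this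
    linarith
  · rw [show (2 * q₁ + 1) / 2 = q₁ by omega, show (2 * q₂ + 1) / 2 = q₂ by omega] at *
    rw [modelQ_odd, modelQ_odd]
    have := rpow_succ_sub ht (m := ((2 * q₂ + 1 : ℕ) : ℝ) - (2 * q₁ + 1 : ℕ) + 1) (by linarith)
    push_cast at *
    rw [show (2 * (q₂ : ℝ) + 1 - (2 * q₁ + 1) + 1 + 1) = 2 * (q₂ - q₁ + 1) by ring] at this
    linarith

/-! ### Basic intervals in step/position indexing -/

theorem word_even (k q : ℕ) : word (k + 1) (2 * q) = word k q ++ [false] := by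
  rw [word, show 2 * q / 2 = q by omega, decide_eq_false (by omega)]

theorem word_odd (k q : ℕ) : word (k + 1) (2 * q + 1) = word k q ++ [true] := by
  rw [word, show (2 * q + 1) / 2 = q by omega, decide_eq_true (by omega)]

theorem length_word (k l : ℕ) : (word k l).length = k := by
  induction k generalizing l with
  | zero => rfl
  | succ k ih => simp [word, ih]

theorem exists_word (j : List Bool) : ∃ l < 2 ^ j.length, word j.length l = j := by
  induction j using List.reverseRecOn with
  | nil => exact ⟨0, by simp, rfl⟩
  | append_singleton j c ih =>
    obtain ⟨l, hl, e⟩ := ih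
    rw [List.length_append, List.length_singleton, pow_succ]
    cases c
    · exact ⟨2 * l, by omega, by rw [word_even, e]⟩
    · exact ⟨2 * l + 1, by omega, by rw [word_odd, e]⟩

namespace CantorConstruction

variable (C : CantorConstruction)

theorem mem_cantorSet {y : ℝ} :
    y ∈ C.cantorSet ↔ ∀ n, ∃ l < 2 ^ n, y ∈ C.I (word n l) := by
  simp only [cantorSet, mem_iInter, mem_iUnion, mem_ofPred_eq]
  refine forall_congr' fun n => ⟨?_, ?_⟩
  · rintro ⟨j, rfl, hy⟩
    obtain ⟨l, hl, e⟩ := exists_word j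
    exact ⟨l, hl, by rwa [e]⟩
  · rintro ⟨l, -, hy⟩
    exact ⟨_, length_word n l, hy⟩

theorem I_succ_subset (n l : ℕ) : C.I (word (n + 1) l) ⊆ C.I (word n (l / 2)) := by
  obtain ⟨q, rfl | rfl⟩ := Nat.even_or_odd' l
  · rw [word_even, show 2 * q / 2 = q by omega]
    exact Icc_subset_Icc (C.left0 _).ge (C.sub0 _)
  · rw [word_odd, show (2 * q + 1) / 2 = q by omega]
    exact Icc_subset_Icc (C.sub1 _) (C.right1 _).le

/-- Each basic interval contains a point of the Cantor set, namely its left endpoint. -/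
theorem left_mem_cantorSet (n l : ℕ) (hl : l < 2 ^ n) : C.a (word n l) ∈ C.cantorSet := by
  rw [mem_cantorSet]
  have up : ∀ d, C.a (word (n + d) (2 ^ d * l)) = C.a (word n l) := by
    intro d
    induction d with
    | zero => simp
    | succ d ih => rw [← add_assoc, pow_succ', mul_assoc, word_even, C.left0, ih]
  have down : ∀ d m l, l < 2 ^ (m + d) → ∃ l' < 2 ^ m, C.I (word (m + d) l) ⊆ C.I (word m l') := by
    intro d m
    induction d with
    | zero => exact fun l hl => ⟨l, hl, le_rfl⟩
    | succ d ih =>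
      intro l hl
      rw [← add_assoc, pow_succ] at hl
      obtain ⟨l', h1, h2⟩ := ih (l / 2) (by omega)
      exact ⟨l', h1, (C.I_succ_subset (m + d) l).trans h2⟩
  intro m
  rcases le_total n m with h | h
  · obtain ⟨d, rfl⟩ := Nat.exists_eq_add_of_le h
    refine ⟨2 ^ d * l, ?_, ?_⟩
    · rw [pow_add, mul_comm]; gcongr
    · rw [← up d]; exact left_mem_Icc.2 (C.le _)
  · obtain ⟨d, rfl⟩ := Nat.exists_eq_add_of_le h
    obtain ⟨l', h1, h2⟩ := down d m l hl
    exact ⟨l', h1, h2 (left_mem_Icc.2 (C.le _))⟩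

theorem isCompact_cantorSet : IsCompact C.cantorSet := by
  have e : C.cantorSet = ⋂ n, ⋃ l ∈ Finset.range (2 ^ n), C.I (word n l) := by
    ext y; rw [mem_cantorSet]; simp
  have hcl : IsClosed C.cantorSet := by
    rw [e]
    exact isClosed_iInter fun n => isClosed_biUnion_finset fun l _ => isClosed_Icc
  refine (isCompact_Icc (a := C.a []) (b := C.b [])).of_isClosed_subset hcl fun y hy => ?_
  obtain ⟨l, -, h⟩ := C.mem_cantorSet.1 hy 0
  exact h

/-! ### Comparison of lengths with the model -/

theorem adjacent (n : ℕ) : ∀ l, l + 1 < 2 ^ n → C.b (word n l) < C.a (word n (l + 1)) := by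
  induction n with
  | zero => intro l hl; simp at hl
  | succ n ih =>
    intro l hl
    rw [pow_succ] at hl
    obtain ⟨q, rfl | rfl⟩ := Nat.even_or_odd' l
    · rw [word_odd, word_even]
      exact C.disj _
    · rw [show 2 * q + 1 + 1 = 2 * (q + 1) by ring, word_odd, word_even, C.left0, C.right1]
      exact ih q (by omega)

theorem left_le_right {n l₁ l₂ : ℕ} (h : l₁ ≤ l₂) (h2 : l₂ < 2 ^ n) :
    C.a (word n l₁) ≤ C.b (word n l₂) := by
  induction l₂, h using Nat.le_induction with
  | base => exact C.le _
  | succ l hl ih =>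
    exact ((ih (by omega)).trans (C.adjacent n l h2).le).trans (C.le _)

/-- The space between two neighbouring intervals of level `n` is a gap of some level `< n`. Either
that level is below `N` and the space is at least `δ₀`, or it is at least `κ` times the
corresponding space in the model. -/
theorem between {δ₀ κ L r : ℝ} {N : ℕ} (hr : 0 < r) (hL : L = (1 - 2 * r)⁻¹) (hr2 : 2 * r < 1)
    (hsmall : ∀ k < N, ∀ l < 2 ^ k, δ₀ ≤ C.gapLen (word k l))
    (hlo : ∀ k ≥ N, ∀ l < 2 ^ k, κ * r ^ k ≤ C.gapLen (word k l)) (n : ℕ) :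
    ∀ l, l + 1 < 2 ^ n → 
      δ₀ ≤ C.a (word n (l + 1)) - C.b (word n l) ∨
      κ * (L * r ^ n) * (modelQ r⁻¹ (l + 1) - modelQ r⁻¹ l - 1) ≤
        C.a (word n (l + 1)) - C.b (word n l) := by
  have h0 : (1 - 2 * r) ≠ 0 := by linarith
  induction n with
  | zero => intro l hl; simp at hl
  | succ n ih =>
    intro l hl
    rw [pow_succ] at hl
    obtain ⟨q, rfl | rfl⟩ := Nat.even_or_odd' l
    · rw [word_odd, word_even, modelQ_odd, modelQ_even]
      rcases lt_or_ge n N with hn | hn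
      · exact Or.inl (hsmall n hn q (by omega))
      · right
        refine le_trans (le_of_eq ?_) (hlo n hn q (by omega))
        rw [hL, pow_succ]; field_simp; ring
    · rw [show 2 * q + 1 + 1 = 2 * (q + 1) by ring, word_odd, word_even, modelQ_odd, modelQ_even,
        C.left0, C.right1]
      refine (ih q (by omega)).imp id fun h => le_trans (le_of_eq ?_) h
      rw [pow_succ]; field_simp; ring

/-- A hull of consecutive basic intervals that is shorter than every gap of level below `N` has at
least `κ` times the length of its counterpart in the model. -/
theorem span {δ₀ κ L r : ℝ} {N : ℕ} (hr : 0 < r) (hL : L = (1 - 2 * r)⁻¹) (hr2 : 2 * r < 1)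
    (hsmall : ∀ k < N, ∀ l < 2 ^ k, δ₀ ≤ C.gapLen (word k l))
    (hlo : ∀ k ≥ N, ∀ l < 2 ^ k, κ * r ^ k ≤ C.gapLen (word k l))
    (hlen : ∀ k ≥ N, ∀ l < 2 ^ k, κ * (L * r ^ k) ≤ C.len (word k l)) {n : ℕ} (hn : N ≤ n)
    {l₁ l₂ : ℕ} (h : l₁ ≤ l₂) (h2 : l₂ < 2 ^ n)
    (hd : C.b (word n l₂) - C.a (word n l₁) < δ₀) :
    κ * (L * r ^ n) * (modelQ r⁻¹ l₂ - modelQ r⁻¹ l₁ + 1) ≤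
      C.b (word n l₂) - C.a (word n l₁) := by
  induction l₂, h using Nat.le_induction with
  | base => simpa [len] using hlen n hn l₁ h2
  | succ l hl ih =>
    have g := C.between hr hL hr2 hsmall hlo n l h2
    have g0 := C.adjacent n l h2
    have hle := C.le (word n (l + 1))
    have hs := C.left_le_right hl (by omega : l < 2 ^ n)
    have ih' := ih (by omega) (by linarith)
    have hl2 := hlen n hn (l + 1) h2
    rw [len] at hl2
    rcases g with g | g <;> nlinarith
end CantorConstruction

/-! ### Asymptotics of gaps and basic intervals -/

theorem gap_asymp {p x : ℝ} (hp : 0 < p) (hx : 2 < x) {B : ℝ} (hB : 1 < B) :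
    ∃ N : ℕ, ∀ n ≥ N, ∀ l : ℕ, l < 2 ^ n → B⁻¹ * (x ^ (-p)) ^ n ≤ (⌊x ^ n⌋₊ + l : ℝ) ^ (-p) ∧
      (⌊x ^ n⌋₊ + l : ℝ) ^ (-p) ≤ B * (x ^ (-p)) ^ n := by
  have hx0 : 0 < x := by linarith
  have t1 : Tendsto (fun n : ℕ => (⌊x ^ n⌋₊ : ℝ) / x ^ n) atTop (nhds 1) :=
    (tendsto_nat_floor_div_atTop (R := ℝ)).comp (tendsto_pow_atTop_atTop_of_one_lt (by linarith))
  have t2 : Tendsto (fun n : ℕ => (⌊x ^ n⌋₊ : ℝ) / x ^ n + (2 / x) ^ n) atTop (nhds 1) := by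
    simpa using t1.add (tendsto_pow_atTop_nhds_zero_of_lt_one (r := 2 / x) (by positivity)
      ((div_lt_one hx0).2 hx))
  have u1 : Tendsto (fun n : ℕ => ((⌊x ^ n⌋₊ : ℝ) / x ^ n) ^ (-p)) atTop (nhds 1) := by
    simpa using t1.rpow_const (p := -p) (Or.inl one_ne_zero)
  have u2 : Tendsto (fun n : ℕ => ((⌊x ^ n⌋₊ : ℝ) / x ^ n + (2 / x) ^ n) ^ (-p))
      atTop (nhds 1) := by
    simpa using t2.rpow_const (p := -p) (Or.inl one_ne_zero)
  obtain ⟨N, hN⟩ := eventually_atTop.1 ((u1.eventually_le_const hB).and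
    (u2.eventually_const_le (inv_lt_one_of_one_lt₀ hB)))
  refine ⟨N, fun n hn l hl => ?_⟩
  obtain ⟨h1, h2⟩ := hN n hn
  have hxn : 0 < x ^ n := by positivity
  have hf : (0 : ℝ) < ⌊x ^ n⌋₊ := by
    exact_mod_cast Nat.floor_pos.2 (one_le_pow₀ (by linarith))
  have hl' : (l : ℝ) ≤ 2 ^ n := by exact_mod_cast hl.le
  have e : (x ^ (-p)) ^ n = (x ^ n) ^ (-p) := by
    rw [← Real.rpow_natCast, ← Real.rpow_natCast, ← Real.rpow_mul hx0.le, ← Real.rpow_mul hx0.le,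
      mul_comm]
  rw [e]
  constructor
  · calc B⁻¹ * (x ^ n) ^ (-p) ≤ ((⌊x ^ n⌋₊ : ℝ) / x ^ n + (2 / x) ^ n) ^ (-p) * (x ^ n) ^ (-p) := by
          gcongr
      _ = (⌊x ^ n⌋₊ + 2 ^ n : ℝ) ^ (-p) := by
          rw [← Real.mul_rpow (by positivity) hxn.le]
          congr 1
          rw [add_mul, ← mul_pow, div_mul_cancel₀ _ hxn.ne', div_mul_cancel₀ _ hx0.ne']
      _ ≤ _ := Real.rpow_le_rpow_of_nonpos (by positivity) (by gcongr) (by linarith)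
  · calc (⌊x ^ n⌋₊ + l : ℝ) ^ (-p) ≤ (⌊x ^ n⌋₊ : ℝ) ^ (-p) :=
          Real.rpow_le_rpow_of_nonpos hf (by simp) (by linarith)
      _ = ((⌊x ^ n⌋₊ : ℝ) / x ^ n) ^ (-p) * (x ^ n) ^ (-p) := by
          rw [← Real.mul_rpow (by positivity) hxn.le, div_mul_cancel₀ _ hxn.ne']
      _ ≤ _ := by gcongr

theorem gap_small {p x : ℝ} (hp : 0 < p) (hx : 2 < x) (N : ℕ) :
    ∀ k < N, ∀ l : ℕ, l < 2 ^ k → (2 * x ^ N) ^ (-p) ≤ (⌊x ^ k⌋₊ + l : ℝ) ^ (-p) := by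
  intro k hk l hl
  have hf : (0 : ℝ) < ⌊x ^ k⌋₊ := by
    exact_mod_cast Nat.floor_pos.2 (one_le_pow₀ (by linarith))
  refine Real.rpow_le_rpow_of_nonpos (by positivity) ?_ (by linarith)
  have h1 : (⌊x ^ k⌋₊ : ℝ) ≤ x ^ k := Nat.floor_le (by positivity)
  have h2 : (l : ℝ) ≤ 2 ^ k := by exact_mod_cast hl.le
  have h3 : (2 : ℝ) ^ k ≤ x ^ k := by gcongr
  have h4 : x ^ k ≤ x ^ N := pow_le_pow_right₀ (by linarith) hk.le
  linarith

namespace CantorConstruction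

variable (C : CantorConstruction)

/-- Bounds on the gaps carry over to the basic intervals: a basic interval of level `k` contains
`2 ^ h` gaps of level `k + h`, and `∑ 2 ^ h * r ^ (k + h) = L * r ^ k`. -/
theorem len_bounds {r κ K L : ℝ} {N : ℕ} (hr : 0 < r) (hr2 : 2 * r < 1) (hL : L = (1 - 2 * r)⁻¹)
    (hκ : 0 < κ)
    (hzero : ∀ k l : ℕ, l < 2 ^ k →
      C.len (word k l) =
        ∑' hh : ℕ, ∑ m ∈ Finset.range (2 ^ hh),
          C.gapLen (word (k + hh) (2 ^ hh * l + m)))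
    (hlo : ∀ k ≥ N, ∀ l < 2 ^ k, κ * r ^ k ≤ C.gapLen (word k l))
    (hup : ∀ k ≥ N, ∀ l < 2 ^ k, C.gapLen (word k l) ≤ K * r ^ k) :
    ∀ k ≥ N, ∀ l < 2 ^ k, κ * (L * r ^ k) ≤ C.len (word k l) ∧
      C.len (word k l) ≤ K * (L * r ^ k) := by
  intro k hk l hl
  have idx : ∀ h, ∀ m ∈ Finset.range (2 ^ h), 2 ^ h * l + m < 2 ^ (k + h) := by
    intro h m hm
    rw [Finset.mem_range] at hm
    calc 2 ^ h * l + m < 2 ^ h * l + 2 ^ h := by omega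
      _ = 2 ^ h * (l + 1) := by ring
      _ ≤ 2 ^ h * 2 ^ k := by gcongr; omega
      _ = _ := by ring
  have geo : ∀ c : ℝ, HasSum (fun h : ℕ => c * r ^ k * (2 * r) ^ h) (c * (L * r ^ k)) := by
    intro c
    have := (hasSum_geometric_of_lt_one (r := 2 * r) (by positivity) hr2).mul_left (c * r ^ k)
    rwa [← hL, mul_assoc c, mul_comm (r ^ k)] at this
  set f : ℕ → ℝ := fun hh => ∑ m ∈ Finset.range (2 ^ hh),
          C.gapLen (word (k + hh) (2 ^ hh * l + m)) with hf
  have f1 : ∀ h, κ * r ^ k * (2 * r) ^ h ≤ f h := by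
    intro h
    have := Finset.card_nsmul_le_sum (Finset.range (2 ^ h)) _ _
      (fun m hm => hlo (k + h) (by omega) _ (idx h m hm))
    refine le_trans (le_of_eq ?_) this
    simp [pow_add, mul_pow]; ring
  have f2 : ∀ h, f h ≤ K * r ^ k * (2 * r) ^ h := by
    intro h
    have := Finset.sum_le_card_nsmul (Finset.range (2 ^ h)) _ _
      (fun m hm => hup (k + h) (by omega) _ (idx h m hm))
    refine this.trans (le_of_eq ?_)
    simp [pow_add, mul_pow]; ring
  have hs : Summable f := Summable.of_nonneg_of_le
    (fun h => le_trans (by positivity) (f1 h)) f2 (geo K).summable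
  rw [hzero k l hl]
  exact ⟨hasSum_le f1 (geo κ) hs.hasSum, hasSum_le f2 hs.hasSum (geo K)⟩

/-! ### The two bounds for the measure -/

/-- Upper bound, from the cover by the basic intervals of one large level. -/
theorem muH_le {r s K L : ℝ} {N : ℕ} (hr : 0 < r) (hr1 : r < 1) (hs : 0 < s)
    (hrs : r ^ s = 1 / 2) (hK : 0 < K) (hL : 0 < L)
    (hlen : ∀ k ≥ N, ∀ l < 2 ^ k, C.len (word k l) ≤ K * (L * r ^ k)) {η : ℝ} (hη : 0 < η) :
    muH (fun _ δ => δ ^ s) C.cantorSet ≤ ENNReal.ofReal (K ^ s * L ^ s + η) := by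
  refine iSup₂_le fun δ hδ => ?_
  have ht : Tendsto (fun n : ℕ => K * (L * r ^ n)) atTop (nhds 0) := by
    simpa using ((tendsto_pow_atTop_nhds_zero_of_lt_one hr.le hr1).const_mul L).const_mul K
  obtain ⟨n, hnN, hnδ⟩ := ((eventually_ge_atTop N).and (ht.eventually_le_const hδ)).exists
  set D := K * (L * r ^ n) with hD
  have hD0 : 0 < D := by positivity
  have hDs : D ^ s = K ^ s * L ^ s * (1 / 2) ^ n := by
    rw [hD, Real.mul_rpow hK.le (by positivity), Real.mul_rpow hL.le (by positivity),
      ← Real.rpow_natCast r n, ← Real.rpow_mul hr.le, mul_comm (n : ℝ), Real.rpow_mul hr.le, hrs,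
      Real.rpow_natCast]
    ring
  -- `muH` asks for infinitely many intervals of positive length, so the finite cover is padded
  -- with intervals of length `e k`, whose contributions sum to at most `η`
  set η' := min (δ ^ s) (η / 2) with hη'
  have hη0 : 0 < η' := lt_min (by positivity) (by positivity)
  let e : ℕ → ℝ := fun k => (η' * (1 / 2) ^ k) ^ s⁻¹
  have he0 : ∀ k, 0 < e k := fun k => by positivity
  have hes : ∀ k, e k ^ s = η' * (1 / 2) ^ k := fun k =>
    Real.rpow_inv_rpow (by positivity) hs.ne'
  have heδ : ∀ k, e k ≤ δ := by
    intro k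
    rw [← Real.rpow_le_rpow_iff (he0 k).le hδ.le hs, hes]
    calc η' * (1 / 2) ^ k ≤ η' * 1 := by
          gcongr; exact pow_le_one₀ (by norm_num) (by norm_num)
      _ ≤ _ := by rw [mul_one]; exact min_le_left _ _
  let c : ℕ → ℝ × ℝ := fun k => if k < 2 ^ n then (C.mid (word n k), D) else (0, e k)
  refine (iInf₂_le c ⟨fun k => ?_, fun y hy => ?_⟩).trans ?_
  rotate_left
  · by_cases hk : k < 2 ^ n
    · simp only [c, if_pos hk]; exact ⟨hD0, hnδ⟩
    · simp only [c, if_neg hk]; exact ⟨he0 k, heδ k⟩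
  · obtain ⟨l, hl, hy⟩ := C.mem_cantorSet.1 hy n
    refine mem_iUnion.2 ⟨l, ?_⟩
    simp only [c, if_pos hl]
    have := hlen n hnN l hl
    simp only [I, Iv, mid, len, mem_Icc] at *
    constructor <;> linarith
  · have hle : ∀ k, ENNReal.ofReal ((c k).2 ^ s) ≤
        (if k < 2 ^ n then ENNReal.ofReal (D ^ s) else 0) +
          ENNReal.ofReal (η' * (1 / 2) ^ k) := by
      intro k
      by_cases hk : k < 2 ^ n
      · simp only [c, if_pos hk]; exact le_self_add
      · simp only [c, if_neg hk, hes]; exact le_add_self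
    refine (ENNReal.tsum_le_tsum hle).trans ?_
    rw [ENNReal.tsum_add, ENNReal.ofReal_add (by positivity) hη.le]
    gcongr
    · rw [tsum_eq_sum (s := Finset.range (2 ^ n)) (by intro k hk; simp at hk; simp [hk]),
        Finset.sum_congr rfl (fun k hk => if_pos (Finset.mem_range.1 hk)), Finset.sum_const,
        Finset.card_range, nsmul_eq_mul, hDs, ← ENNReal.ofReal_natCast,
        ← ENNReal.ofReal_mul (by positivity)]
      refine ENNReal.ofReal_le_ofReal (le_of_eq ?_)
      push_cast
      rw [mul_left_comm, ← mul_pow]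
      norm_num
    · have hg := (hasSum_geometric_two).mul_left η'
      rw [← ENNReal.ofReal_tsum_of_nonneg (fun k => by positivity) hg.summable, hg.tsum_eq]
      refine ENNReal.ofReal_le_ofReal ?_
      have := min_le_right (δ ^ s) (η / 2)
      linarith

/-- Mass distribution estimate for the uniform mass `2 ^ (-n)` on the intervals of level `n`: the
mass of those contained in an interval of length `d < δ₀` is at most `d ^ s / (κ * L) ^ s`. -/
theorem card_le {r s κ L δ₀ : ℝ} {N : ℕ} (hr : 0 < r) (hr2 : 2 * r < 1)
    (hL : L = (1 - 2 * r)⁻¹) (hs : 0 < s) (hs1 : s ≤ 1) (hrs : r ^ s = 1 / 2) (hκ : 0 < κ)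
    (hsmall : ∀ k < N, ∀ l < 2 ^ k, δ₀ ≤ C.gapLen (word k l))
    (hlo : ∀ k ≥ N, ∀ l < 2 ^ k, κ * r ^ k ≤ C.gapLen (word k l))
    (hlen : ∀ k ≥ N, ∀ l < 2 ^ k, κ * (L * r ^ k) ≤ C.len (word k l)) {n : ℕ} (hn : N ≤ n)
    (T : Finset ℕ) (u d : ℝ) (hd0 : 0 ≤ d) (hd : d < δ₀)
    (hT : ∀ l ∈ T, l < 2 ^ n ∧ C.I (word n l) ⊆ Icc u (u + d)) :
    κ ^ s * L ^ s * (T.card * (1 / 2) ^ n) ≤ d ^ s := by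
  have hL0 : 0 < L := by rw [hL]; exact inv_pos.2 (by linarith)
  rcases T.eq_empty_or_nonempty with rfl | hne
  · simp; positivity
  set l₁ := T.min' hne
  set l₂ := T.max' hne
  have h12 : l₁ ≤ l₂ := T.min'_le_max' hne
  obtain ⟨-, i1⟩ := hT l₁ (T.min'_mem hne)
  obtain ⟨b2, i2⟩ := hT l₂ (T.max'_mem hne)
  have j1 := (i1 (left_mem_Icc.2 (C.le _))).1
  have j2 := (i2 (right_mem_Icc.2 (C.le _))).2
  have hspan := C.span hr hL hr2 hsmall hlo hlen hn h12 b2 (by linarith)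
  have ht : (1 : ℝ) ≤ s⁻¹ := (one_le_inv₀ hs).2 hs1
  have hR : r⁻¹ = (2 : ℝ) ^ s⁻¹ := by
    have : r = (1 / 2 : ℝ) ^ s⁻¹ := by rw [← hrs, Real.rpow_rpow_inv hr.le hs.ne']
    rw [this, one_div, Real.inv_rpow (by norm_num), inv_inv]
  have hmod := rpow_le_modelQ ht l₂ l₁ h12
  rw [← hR] at hmod
  have hcard : (T.card : ℝ) ≤ (l₂ : ℝ) - l₁ + 1 := by
    have : T ⊆ Finset.Icc l₁ l₂ := fun l hl =>
      Finset.mem_Icc.2 ⟨T.min'_le l hl, T.le_max' l hl⟩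
    have := Finset.card_le_card this
    rw [Nat.card_Icc] at this
    have h : T.card + l₁ ≤ l₂ + 1 := by omega
    have : (T.card : ℝ) + l₁ ≤ l₂ + 1 := by exact_mod_cast h
    linarith
  have h1 : κ * (L * r ^ n) * (T.card : ℝ) ^ s⁻¹ ≤ d := by
    calc κ * (L * r ^ n) * (T.card : ℝ) ^ s⁻¹
        ≤ κ * (L * r ^ n) * ((l₂ : ℝ) - l₁ + 1) ^ s⁻¹ := by gcongr
      _ ≤ κ * (L * r ^ n) * (modelQ r⁻¹ l₂ - modelQ r⁻¹ l₁ + 1) := by gcongr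
      _ ≤ d := by linarith
  have h2 := Real.rpow_le_rpow (by positivity) h1 hs.le
  refine le_trans (le_of_eq ?_) h2
  rw [Real.mul_rpow (by positivity) (by positivity), Real.rpow_inv_rpow (by positivity) hs.ne',
    Real.mul_rpow hκ.le (by positivity), Real.mul_rpow hL0.le (by positivity),
    ← Real.rpow_natCast r n, ← Real.rpow_mul hr.le, mul_comm (n : ℝ), Real.rpow_mul hr.le, hrs,
    Real.rpow_natCast]
  ring

/-- Lower bound. The number `θ` is the factor by which a cover is enlarged to make it open. -/
theorem le_muH {r s κ L δ₀ θ : ℝ} {N : ℕ} (hr : 0 < r) (hr2 : 2 * r < 1)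
    (hL : L = (1 - 2 * r)⁻¹) (hs : 0 < s) (hs1 : s ≤ 1) (hrs : r ^ s = 1 / 2) (hκ : 0 < κ)
    (hδ₀ : 0 < δ₀) (hθ : 1 < θ)
    (hsmall : ∀ k < N, ∀ l < 2 ^ k, δ₀ ≤ C.gapLen (word k l))
    (hlo : ∀ k ≥ N, ∀ l < 2 ^ k, κ * r ^ k ≤ C.gapLen (word k l))
    (hlen : ∀ k ≥ N, ∀ l < 2 ^ k, κ * (L * r ^ k) ≤ C.len (word k l)) :
    ENNReal.ofReal (κ ^ s * L ^ s / θ ^ s) ≤ muH (fun _ δ => δ ^ s) C.cantorSet := by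
  have hθ0 : 0 < θ := by linarith
  refine le_trans ?_ (le_iSup₂ (f := fun (δ : ℝ) (_ : 0 < δ) => _) (δ₀ / (2 * θ))
    (by positivity))
  refine le_iInf₂ fun c ⟨hc, hcov⟩ => ?_
  obtain ⟨ε, hε, hleb⟩ := lebesgue_number_lemma_of_metric C.isCompact_cantorSet
    (c := fun k => Ioo ((c k).1 - θ * (c k).2 / 2) ((c k).1 + θ * (c k).2 / 2))
    (fun _ => isOpen_Ioo) (fun y hy => by
      obtain ⟨k, hk⟩ := mem_iUnion.1 (hcov hy)
      refine mem_iUnion.2 ⟨k, ?_⟩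
      have h1 := (hc k).1
      have h2 : (c k).2 < θ * (c k).2 := lt_mul_of_one_lt_left h1 hθ
      simp only [Iv, mem_Icc, mem_Ioo] at *
      constructor <;> linarith)
  obtain ⟨M, hM⟩ := C.shrink ε hε
  set n := max N M with hn
  have hpick : ∀ l : ℕ, ∃ k, l < 2 ^ n → C.I (word n l) ⊆
      Icc ((c k).1 - θ * (c k).2 / 2) ((c k).1 - θ * (c k).2 / 2 + θ * (c k).2) := by
    intro l
    by_cases hl : l < 2 ^ n
    · obtain ⟨k, hk⟩ := hleb _ (C.left_mem_cantorSet n l hl)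
      refine ⟨k, fun _ y hy => ?_⟩
      have hlt := hM (word n l) (by rw [length_word]; exact le_max_right _ _)
      have hyb : y ∈ Metric.ball (C.a (word n l)) ε := by
        rw [Metric.mem_ball, Real.dist_eq, abs_of_nonneg (by linarith [hy.1])]
        linarith [hy.2]
      have := hk hyb
      exact ⟨this.1.le, by linarith [this.2]⟩
    · exact ⟨0, fun h => absurd h hl⟩
  choose i hi using hpick
  set J := (Finset.range (2 ^ n)).image i
  have hJ : κ ^ s * L ^ s / θ ^ s ≤ ∑ k ∈ J, (c k).2 ^ s := by
    rw [div_le_iff₀ (by positivity), Finset.sum_mul]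
    have hk : ∀ k ∈ J, κ ^ s * L ^ s *
        ((((Finset.range (2 ^ n)).filter fun l => i l = k).card : ℝ) * (1 / 2) ^ n) ≤
        (c k).2 ^ s * θ ^ s := by
      intro k _
      have h0 := (hc k).1
      rw [mul_comm ((c k).2 ^ s), ← Real.mul_rpow hθ0.le h0.le]
      refine C.card_le hr hr2 hL hs hs1 hrs hκ hsmall hlo hlen (le_max_left N M) _
        ((c k).1 - θ * (c k).2 / 2) _ (by positivity) ?_ ?_
      · have := (hc k).2
        rw [le_div_iff₀ (by positivity)] at this
        nlinarith
      · intro l hl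
        rw [Finset.mem_filter, Finset.mem_range] at hl
        obtain ⟨hl, rfl⟩ := hl
        exact ⟨hl, hi l hl⟩
    refine le_trans (le_of_eq ?_) (Finset.sum_le_sum hk)
    rw [← Finset.mul_sum, ← Finset.sum_mul, ← Nat.cast_sum,
      ← Finset.card_eq_sum_card_image, Finset.card_range]
    push_cast
    rw [← mul_pow]
    norm_num
  calc ENNReal.ofReal (κ ^ s * L ^ s / θ ^ s) ≤ ENNReal.ofReal (∑ k ∈ J, (c k).2 ^ s) :=
        ENNReal.ofReal_le_ofReal hJ
    _ = ∑ k ∈ J, ENNReal.ofReal ((c k).2 ^ s) :=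
        ENNReal.ofReal_sum_of_nonneg fun k _ => Real.rpow_nonneg (hc k).1.le _
    _ ≤ _ := ENNReal.sum_le_tsum J

end CantorConstruction

/-- For the Cantor set `C_{p,x}` with gap lengths
`|G_l^k| = (⌊x^k⌋ + l)^{-p}` (`p > 1`, `x > 2`) and Lebesgue-null Cantor set, the
generalized Hausdorff measure associated to the gauge function `h(w,δ) = δ^s`, with
`s = log 2/(p·log x)`, satisfies `μ_s(C_{p,x}) = (1 − 2·x^{−p})^{−s}`. -/
theorem statement15 (p x : ℝ) (hp : 1 < p) (hx : 2 < x) (C : CantorConstruction)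
    (hzero : ∀ k l : ℕ, l < 2 ^ k →
      C.len (word k l) =
        ∑' hh : ℕ, ∑ m ∈ Finset.range (2 ^ hh),
          C.gapLen (word (k + hh) (2 ^ hh * l + m)))
    (hgap : ∀ k l : ℕ, l < 2 ^ k →
      C.gapLen (word k l) = ((⌊x ^ k⌋₊ + l : ℝ)) ^ (-p)) :
    muH (fun _ δ => δ ^ (Real.log 2 / (p * Real.log x))) C.cantorSet =
      ENNReal.ofReal ((1 - 2 * x ^ (-p)) ^ (-(Real.log 2 / (p * Real.log x)))) := by
  have hx0 : 0 < x := by linarith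
  have hlog2 : 0 < Real.log 2 := Real.log_pos (by norm_num)
  have hlogx : Real.log 2 < Real.log x := Real.log_lt_log (by norm_num) hx
  have hden : Real.log 2 < p * Real.log x := by nlinarith
  set s := Real.log 2 / (p * Real.log x) with hs_def
  have hs : 0 < s := div_pos hlog2 (by linarith)
  have hs1 : s ≤ 1 := (div_le_one (by linarith)).2 hden.le
  set r := x ^ (-p) with hr_def
  have hr : 0 < r := by positivity
  have hrs : r ^ s = 1 / 2 := by
    rw [hr_def, ← Real.rpow_mul hx0.le, Real.rpow_def_of_pos hx0,
      show Real.log x * (-p * s) = -Real.log 2 by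
        have : Real.log x ≠ 0 := by linarith
        rw [hs_def]; field_simp, Real.exp_neg,
      Real.exp_log (by norm_num), one_div]
  have hr2 : 2 * r < 1 := by
    have h1 : r < x ^ (-1 : ℝ) := Real.rpow_lt_rpow_of_exponent_lt (by linarith) (by linarith)
    rw [Real.rpow_neg_one] at h1
    have h2 : x⁻¹ < 2⁻¹ := by gcongr
    linarith
  obtain ⟨L, hL⟩ : ∃ L, L = (1 - 2 * r)⁻¹ := ⟨_, rfl⟩
  have hL0 : 0 < L := by rw [hL]; exact inv_pos.2 (by linarith)
  have hval : (1 - 2 * r) ^ (-s) = L ^ s := by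
    rw [hL, Real.inv_rpow (by linarith), Real.rpow_neg (by linarith)]
  rw [hval]
  -- all error factors are powers of `B`, and the last step lets `B` decrease to `1`
  have main : ∀ B : ℝ, 1 < B →
      ENNReal.ofReal (B⁻¹ ^ s * L ^ s / B ^ s) ≤ muH (fun _ δ => δ ^ s) C.cantorSet ∧
      muH (fun _ δ => δ ^ s) C.cantorSet ≤ ENNReal.ofReal (B ^ s * L ^ s + (B - 1)) := by
    intro B hB
    have hB0 : 0 < B := by linarith
    obtain ⟨N, hN⟩ := gap_asymp (by linarith : 0 < p) hx hB
    have hlo : ∀ k ≥ N, ∀ l < 2 ^ k, B⁻¹ * r ^ k ≤ C.gapLen (word k l) := fun k hk l hl => by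
      rw [hgap k l hl]; exact (hN k hk l hl).1
    have hup : ∀ k ≥ N, ∀ l < 2 ^ k, C.gapLen (word k l) ≤ B * r ^ k := fun k hk l hl => by
      rw [hgap k l hl]; exact (hN k hk l hl).2
    have hsmall : ∀ k < N, ∀ l < 2 ^ k, (2 * x ^ N) ^ (-p) ≤ C.gapLen (word k l) :=
      fun k hk l hl => by
        rw [hgap k l hl]; exact gap_small (by linarith) hx N k hk l hl
    have hlen := C.len_bounds hr hr2 hL (inv_pos.2 hB0) hzero hlo hup
    exact ⟨C.le_muH hr hr2 hL hs hs1 hrs (inv_pos.2 hB0) (by positivity) hB hsmall hlo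
      fun k hk l hl => (hlen k hk l hl).1,
      C.muH_le hr (by linarith) hs hrs hB0 hL0 (fun k hk l hl => (hlen k hk l hl).2)
        (sub_pos.2 hB)⟩
  have hid : Tendsto (fun B : ℝ => B) (nhdsWithin 1 (Ioi 1)) (nhds 1) := nhdsWithin_le_nhds
  have hBs : Tendsto (fun B : ℝ => B ^ s) (nhdsWithin 1 (Ioi 1)) (nhds 1) := by
    simpa using hid.rpow_const (p := s) (Or.inl one_ne_zero)
  have hBi : Tendsto (fun B : ℝ => B⁻¹ ^ s) (nhdsWithin 1 (Ioi 1)) (nhds 1) := by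
    simpa using (hid.inv₀ one_ne_zero).rpow_const (p := s) (Or.inl (by simp))
  have hev : ∀ᶠ B : ℝ in nhdsWithin 1 (Ioi 1), 1 < B := self_mem_nhdsWithin
  refine le_antisymm ?_ ?_
  · have h : Tendsto (fun B : ℝ => B ^ s * L ^ s + (B - 1)) (nhdsWithin 1 (Ioi 1))
        (nhds (L ^ s)) := by
      simpa using (hBs.mul_const (L ^ s)).add (hid.sub_const 1)
    exact ge_of_tendsto (ENNReal.tendsto_ofReal h) (hev.mono fun B hB => (main B hB).2)
  · have h : Tendsto (fun B : ℝ => B⁻¹ ^ s * L ^ s / B ^ s) (nhdsWithin 1 (Ioi 1))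
        (nhds (L ^ s)) := by
      have := (hBi.mul_const (L ^ s)).div hBs one_ne_zero
      rwa [one_mul, div_one] at this
    exact le_of_tendsto (ENNReal.tendsto_ofReal h) (hev.mono fun B hB => (main B hB).1)
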